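/- Let $S$ be a finite set with $|S| = r \geq 1$, $R$ a commutative ring, $t, x \in R$, and let $a, b : \mathcal{P}(S) \to R$ be functions on subsets of $S$. For a nonempty subset $I \subseteq S$ set $a^{\circ}(I) = \sum_{J \supseteq I} (-1)^{|J|-|I|} a(J)$ and $b^{\circ}(I) = \sum_{J \supseteq I} (-1)^{|J|-|I|} b(J)$. Then $x \;-\; \sum_{\emptyset \neq J \subseteq S} (-1)^{|J|-1} a(J) \;-\; t \sum_{\emptyset \neq I \subseteq S} (1-t)^{|I|-1} \big( a^{\circ}(I) - b^{\circ}(I) \big) \;=\; x \;+\; \sum_{k=1}^{r} (-1)^{k} \Big( \sum_{i=0}^{k} t^{i} \Big) \sum_{\substack{J \subseteq S \\ |J| = k}} a(J) \;-\; \sum_{k=1}^{r} (-1)^{k} \Big( \sum_{i=1}^{k} t^{i} \Big) \sum_{\substack{J \subseteq S \\ |J| = k}} b(J)$. -/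

import Mathlib

/-!
Both sides are linear in `a` and `b`, so it suffices to compare the coefficients of `a J` and `b J`
for each nonempty `J ⊆ S`. Exchanging the order of summation, the double sum contributes to
`a J` the weight `∑_{∅ ≠ I ⊆ J} (1 - t)^(|I| - 1) (-1)^(|J| - |I|)`, which equals
`-(-1)^|J| (1 + t + ⋯ + t^(|J| - 1))` (`sum_weight_eq`). Formally this is the binomial theorem
divided by `1 - t`; since `1 - t` may be a zero divisor in `R`, it is proved by induction on `J`
instead.
-/

/-- The binomial theorem with the empty set removed, divided by `1 - t`. Splitting the subsets of
`insert e J` by membership of `e`, those avoiding `e` give minus the sum for `J`, and those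
containing `e` give `((1 - t) - 1)^|J|`. -/
lemma sum_weight_eq {ι R : Type*} [DecidableEq ι] [CommRing R] (t : R) (J : Finset ι) :
    ∑ I ∈ J.powerset.filter (fun I => I.Nonempty),
        (1 - t) ^ (I.card - 1) * (-1 : R) ^ (J.card - I.card)
      = -((-1) ^ J.card * ∑ i ∈ Finset.range J.card, t ^ i) := by
  induction J using Finset.induction_on with
  | empty => simp [Finset.sum_filter]
  | insert e J he ih =>
    rw [Finset.sum_filter] at ih ⊢
    rw [Finset.sum_powerset_insert he, Finset.card_insert_of_notMem he]
    have h1 : ∑ I ∈ J.powerset, (if I.Nonempty then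
          (1 - t) ^ (I.card - 1) * (-1 : R) ^ (J.card + 1 - I.card) else 0)
        = -∑ I ∈ J.powerset, (if I.Nonempty then
          (1 - t) ^ (I.card - 1) * (-1 : R) ^ (J.card - I.card) else 0) := by
      rw [← Finset.sum_neg_distrib]
      refine Finset.sum_congr rfl fun I hI => ?_
      have hc := Finset.card_le_card (Finset.mem_powerset.1 hI)
      rw [Nat.sub_add_comm hc, pow_succ]
      split_ifs <;> ring
    have h2 : ∑ I ∈ J.powerset, (if (insert e I).Nonempty then
          (1 - t) ^ ((insert e I).card - 1) * (-1 : R) ^ (J.card + 1 - (insert e I).card) else 0)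
        = (-t) ^ J.card := by
      have hb := Finset.sum_pow_mul_eq_add_pow (1 - t) (-1 : R) J
      rw [show (1 - t) + -1 = -t by ring] at hb
      rw [← hb]
      refine Finset.sum_congr rfl fun I hI => ?_
      have hn : e ∉ I := fun h => he (Finset.mem_powerset.1 hI h)
      rw [if_pos (Finset.insert_nonempty e I), Finset.card_insert_of_notMem hn,
        Nat.add_sub_cancel, Nat.add_sub_add_right]
    rw [h1, h2, ih, Finset.sum_range_succ, neg_pow t]
    ring

/-- Exchanging the order of summation in the double sum over nonempty `I ⊆ J ⊆ S`. -/
lemma sum_moebius_eq {ι R : Type*} [DecidableEq ι] [CommRing R] (t : R) (S : Finset ι)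
    (a : Finset ι → R) :
    ∑ I ∈ S.powerset.filter (fun I => I.Nonempty), (1 - t) ^ (I.card - 1) *
        ∑ J ∈ S.powerset.filter (fun J => I ⊆ J), (-1 : R) ^ (J.card - I.card) * a J
      = ∑ J ∈ S.powerset.filter (fun J => J.Nonempty),
          -((-1) ^ J.card * ∑ i ∈ Finset.range J.card, t ^ i) * a J := by
  simp_rw [← sum_weight_eq, Finset.mul_sum, Finset.sum_mul]
  rw [Finset.sum_comm' (t' := S.powerset.filter (fun J => J.Nonempty))
    (s' := fun J => J.powerset.filter (fun I => I.Nonempty))]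
  · exact Finset.sum_congr rfl fun J _ => Finset.sum_congr rfl fun I _ => by ring
  · intro I J
    simp only [Finset.mem_filter, Finset.mem_powerset]
    constructor
    · rintro ⟨⟨_, hI⟩, hJ, hIJ⟩
      exact ⟨⟨hIJ, hI⟩, hJ, hI.mono hIJ⟩
    · rintro ⟨⟨hIJ, hI⟩, hJ, _⟩
      exact ⟨⟨hIJ.trans hJ, hI⟩, hJ, hIJ⟩

lemma sum_card_fiber_eq {ι R : Type*} [DecidableEq ι] [CommRing R] (S : Finset ι)
    (F : ℕ → R) (a : Finset ι → R) :
    ∑ k ∈ Finset.Icc 1 S.card, F k * ∑ J ∈ S.powerset.filter (fun J => J.card = k), a J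
      = ∑ J ∈ S.powerset.filter (fun J => J.Nonempty), F J.card * a J := by
  simp_rw [Finset.mul_sum]
  rw [Finset.sum_comm' (t' := S.powerset.filter (fun J => J.Nonempty))
    (s' := fun J => {J.card})]
  · simp
  · intro k J
    simp only [Finset.mem_filter, Finset.mem_powerset, Finset.mem_Icc, Finset.mem_singleton]
    constructor
    · rintro ⟨⟨hk, _⟩, hJ, rfl⟩
      exact ⟨rfl, hJ, Finset.card_pos.1 hk⟩
    · rintro ⟨rfl, hJ, hn⟩
      exact ⟨⟨hn.card_pos, Finset.card_le_card hJ⟩, hJ, rfl⟩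


/-- The complete combinatorial content of Proposition 6.2: with `a°(I)` and
`b°(I)` the superset Möbius transforms of `a` and `b`, the expression
`x - ∑_{J ≠ ∅}(-1)^(|J|-1) a(J) - t ∑_{I ≠ ∅}(1-t)^(|I|-1)(a°(I) - b°(I))`
equals the closed formula for the spectrum polynomial. -/
theorem spectrum_polynomial_formula
    {ι : Type*} [DecidableEq ι] (S : Finset ι) (r : ℕ) (hr : 1 ≤ r)
    (hS : S.card = r)
    (R : Type*) [CommRing R] (t x : R) (a b : Finset ι → R) :
    x - (∑ J ∈ S.powerset.filter (fun J => J.Nonempty),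
          (-1 : R) ^ (J.card - 1) * a J)
      - t * ∑ I ∈ S.powerset.filter (fun I => I.Nonempty),
          (1 - t) ^ (I.card - 1) *
            ((∑ J ∈ S.powerset.filter (fun J => I ⊆ J),
                (-1 : R) ^ (J.card - I.card) * a J)
             - ∑ J ∈ S.powerset.filter (fun J => I ⊆ J),
                (-1 : R) ^ (J.card - I.card) * b J)
      = x + (∑ k ∈ Finset.Icc 1 r,
              (-1 : R) ^ k * (∑ i ∈ Finset.range (k + 1), t ^ i) *
                ∑ J ∈ S.powerset.filter (fun J => J.card = k), a J)
        - ∑ k ∈ Finset.Icc 1 r,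
            (-1 : R) ^ k * (∑ i ∈ Finset.Icc 1 k, t ^ i) *
              ∑ J ∈ S.powerset.filter (fun J => J.card = k), b J := by
  subst hS
  simp_rw [mul_sub, Finset.sum_sub_distrib]
  rw [sum_moebius_eq, sum_moebius_eq,
    sum_card_fiber_eq S (fun k => (-1 : R) ^ k * ∑ i ∈ Finset.range (k + 1), t ^ i),
    sum_card_fiber_eq S (fun k => (-1 : R) ^ k * ∑ i ∈ Finset.Icc 1 k, t ^ i)]
  have hshift (k : ℕ) : ∑ i ∈ Finset.Icc 1 k, t ^ i = t * ∑ i ∈ Finset.range k, t ^ i := by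
    rw [Finset.range_eq_Ico, Finset.mul_sum, ← Finset.Ico_add_one_right_eq_Icc,
      ← Finset.sum_Ico_add' (fun i => t ^ i) 0 k 1]
    exact Finset.sum_congr rfl fun i _ => pow_succ' t i
  have ha : ∑ J ∈ S.powerset.filter (fun J => J.Nonempty),
        ((-1 : R) ^ J.card * ∑ i ∈ Finset.range (J.card + 1), t ^ i) * a J
      = -(∑ J ∈ S.powerset.filter (fun J => J.Nonempty), (-1 : R) ^ (J.card - 1) * a J)
        - t * ∑ J ∈ S.powerset.filter (fun J => J.Nonempty),
          -((-1) ^ J.card * ∑ i ∈ Finset.range J.card, t ^ i) * a J := by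
    rw [Finset.mul_sum, ← Finset.sum_neg_distrib, ← Finset.sum_sub_distrib]
    refine Finset.sum_congr rfl fun J hJ => ?_
    obtain ⟨m, hm⟩ := Nat.exists_eq_succ_of_ne_zero
      (Finset.card_ne_zero.2 (Finset.mem_filter.1 hJ).2)
    rw [geom_sum_succ, hm, Nat.succ_eq_add_one, Nat.add_sub_cancel, pow_succ]
    ring
  have hb : ∑ J ∈ S.powerset.filter (fun J => J.Nonempty),
        ((-1 : R) ^ J.card * ∑ i ∈ Finset.Icc 1 J.card, t ^ i) * b J
      = -(t * ∑ J ∈ S.powerset.filter (fun J => J.Nonempty),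
          -((-1) ^ J.card * ∑ i ∈ Finset.range J.card, t ^ i) * b J) := by
    rw [Finset.mul_sum, ← Finset.sum_neg_distrib]
    refine Finset.sum_congr rfl fun J _ => ?_
    rw [hshift]
    ring
  rw [ha, hb]
  ring
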